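/- Chebyshev–Bessel representation of scaled exponential divided differences: let β ≥ 0, let x_0,…,x_q ∈ [a,b] be pairwise distinct with a < b, set c = (b−a)/2 > 0, d = (a+b)/2, y_j = (x_j − d)/c. Then the q-th divided difference of f_β(x) = e^{−βx} equals (e^{−βd}/c^q) · ( I_0(βc)·T_0[y_0,…,y_q] + 2·Σ_{n=1}^{∞} (−1)^n I_n(βc)·T_n[y_0,…,y_q] ), with absolutely convergent series. -/

import Mathlib

/-- Divided difference of order `q` of `f` on nodes `x 0, …, x q`. -/
noncomputable def divDiff (f : ℝ → ℝ) : (q : ℕ) → (Fin (q + 1) → ℝ) → ℝ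
  | 0, x => f (x 0)
  | q + 1, x =>
      (divDiff f q (fun i => x i.succ) - divDiff f q (fun i => x i.castSucc)) /
        (x (Fin.last (q + 1)) - x 0)

/-- Chebyshev polynomial of the first kind, as a real function. -/
noncomputable def chebT (n : ℤ) : ℝ → ℝ := fun y => (Polynomial.Chebyshev.T ℝ n).eval y

/-- Modified Bessel function of the first kind of integer order `n`. -/
noncomputable def besselI (n : ℕ) (c : ℝ) : ℝ :=
  ∑' m : ℕ, (c / 2) ^ (2 * m + n) / (m.factorial * (m + n).factorial)


lemma divDiff_scale (f g : ℝ → ℝ) (K c : ℝ) (q : ℕ) :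
    ∀ (x y : Fin (q + 1) → ℝ), (∀ i, f (x i) = K * g (y i)) →
      (∀ i j, x i - x j = c * (y i - y j)) →
      divDiff f q x = K / c ^ q * divDiff g q y := by
  induction q with
  | zero => intro x y h _; simp [divDiff, h]
  | succ q ih =>
    intro x y h h2
    rw [divDiff, divDiff, ih _ (fun i => y i.succ) (fun i => h _) (fun i j => h2 _ _),
      ih _ (fun i => y i.castSucc) (fun i => h _) (fun i j => h2 _ _), h2, ← mul_sub,
      mul_div_mul_comm, pow_succ, div_div]

lemma divDiff_hasSum (u : ℕ → ℝ) (F : ℕ → ℝ → ℝ) (f : ℝ → ℝ) (q : ℕ) :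
    ∀ (y : Fin (q + 1) → ℝ), (∀ i, HasSum (fun n => u n * F n (y i)) (f (y i))) →
      HasSum (fun n => u n * divDiff (F n) q y) (divDiff f q y) := by
  induction q with
  | zero => intro y h; simpa [divDiff] using h 0
  | succ q ih =>
    intro y h
    have h1 := ih (fun i => y i.succ) (fun i => h _)
    have h2 := ih (fun i => y i.castSucc) (fun i => h _)
    have h3 := (h1.sub h2).div_const (y (Fin.last (q + 1)) - y 0)
    simp only [divDiff]
    refine h3.congr_fun ?_ 
    intro n
    ring

/-- Reindexing of pairs by difference and minimum. -/
def pairEquiv : ℤ × ℕ ≃ ℕ × ℕ where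
  toFun p := (p.2 + p.1.toNat, p.2 + (-p.1).toNat)
  invFun p := ((p.1 : ℤ) - p.2, min p.1 p.2)
  left_inv := by
    rintro ⟨n, m⟩
    ext <;> simp <;> omega
  right_inv := by
    rintro ⟨n, m⟩
    ext <;> simp <;> omega

lemma exp_hasSum_aux (z : ℂ) : HasSum (fun n : ℕ => z ^ n / n.factorial) (Complex.exp z) := by
  rw [Complex.exp_eq_exp_ℂ]
  exact NormedSpace.expSeries_div_hasSum_exp z

lemma exp_summable_aux (z : ℂ) : Summable (fun n : ℕ => ‖z ^ n / n.factorial‖) :=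
  NormedSpace.norm_expSeries_div_summable z

lemma prod_aux (f g : ℕ → ℂ) (a b : ℂ) (hf : HasSum f a) (hg : HasSum g b)
    (hf' : Summable (fun n => ‖f n‖)) (hg' : Summable (fun n => ‖g n‖)) :
    HasSum (fun p : ℕ × ℕ => f p.1 * g p.2) (a * b) := by
  have hs : Summable (fun p : ℕ × ℕ => f p.1 * g p.2) := summable_mul_of_summable_norm hf' hg'
  exact hf.mul hg hs

lemma exp_mul_aux (z1 z2 : ℂ) :
    HasSum (fun p : ℕ × ℕ => z1 ^ p.1 / p.1.factorial * (z2 ^ p.2 / p.2.factorial))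
      (Complex.exp (z1 + z2)) := by
  rw [Complex.exp_add]
  exact prod_aux (fun n => z1 ^ n / n.factorial) (fun n => z2 ^ n / n.factorial)
    (Complex.exp z1) (Complex.exp z2) (exp_hasSum_aux z1) (exp_hasSum_aux z2)
    (exp_summable_aux z1) (exp_summable_aux z2)

lemma exp_sum_aux (s θ : ℝ) : (-s / 2) * Complex.exp (θ * Complex.I) +
    (-s / 2) * Complex.exp (-θ * Complex.I) = ((-s * Real.cos θ : ℝ) : ℂ) := by
  rw [Complex.ofReal_mul, Complex.ofReal_cos, Complex.cos, Complex.ofReal_neg]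
  ring

lemma exp_term_aux (s θ : ℝ) (j k : ℕ) :
    ((-s / 2) * Complex.exp (θ * Complex.I)) ^ j / j.factorial *
      (((-s / 2) * Complex.exp (-θ * Complex.I)) ^ k / k.factorial) =
    (((-s / 2) ^ (j + k) / (j.factorial * k.factorial) : ℝ) : ℂ) *
      Complex.exp (((((j : ℝ) - k) * θ : ℝ) : ℂ) * Complex.I) := by
  rw [mul_pow, mul_pow, ← Complex.exp_nat_mul, ← Complex.exp_nat_mul]
  have : (((((j : ℝ) - k) * θ : ℝ) : ℂ) * Complex.I) =
    (j * (θ * Complex.I)) + k * (-θ * Complex.I) := by push_cast; ring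
  rw [this, Complex.exp_add]
  generalize Complex.exp (j * (θ * Complex.I)) = A
  generalize Complex.exp (k * (-θ * Complex.I)) = B
  push_cast
  rw [pow_add]
  ring

lemma double_hasSum (s θ : ℝ) :
    HasSum (fun p : ℕ × ℕ => (-s / 2) ^ (p.1 + p.2) / (p.1.factorial * p.2.factorial) *
      Real.cos (((p.1 : ℝ) - p.2) * θ)) (Real.exp (-s * Real.cos θ)) := by
  have h := exp_mul_aux ((-s / 2) * Complex.exp (θ * Complex.I))
    ((-s / 2) * Complex.exp (-θ * Complex.I))
  simp only [exp_term_aux] at h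
  rw [exp_sum_aux, ← Complex.ofReal_exp] at h
  have h4 := Complex.hasSum_re h
  rw [Complex.ofReal_re] at h4
  refine h4.congr_fun fun p => ?_
  rw [Complex.re_ofReal_mul, Complex.exp_ofReal_mul_I_re]

lemma int_hasSum (s θ : ℝ) :
    HasSum (fun n : ℤ => (-1) ^ n.natAbs * besselI n.natAbs s * Real.cos (n * θ))
      (Real.exp (-s * Real.cos θ)) := by
  have h := (pairEquiv.hasSum_iff).2 (double_hasSum s θ)
  have hfib := fun n => (h.summable.prod_factor n).hasSum
  refine (h.prod_fiberwise hfib).congr_fun ?_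
  intro n
  rw [besselI, ← tsum_mul_left, ← tsum_mul_right]
  refine tsum_congr fun m => ?_
  simp only [pairEquiv, Function.comp, Equiv.coe_fn_mk]
  have hs : (-s / 2) = (-1) * (s / 2) := by ring
  have h1 : ∀ k : ℕ, (-1 : ℝ) ^ (2 * m + k) = (-1) ^ k := fun k => by
    rw [pow_add, pow_mul]; simp
  rcases Int.eq_nat_or_neg n with ⟨k, rfl | rfl⟩
  · have e : m + (k : ℤ).toNat + (m + (-(k : ℤ)).toNat) = 2 * m + k := by omega
    have e1 : m + (k : ℤ).toNat = m + k := by omega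
    have e2 : m + (-(k : ℤ)).toNat = m := by omega
    have e3 : (k : ℤ).natAbs = k := by omega
    rw [e, e1, e2, e3, hs, mul_pow, h1]
    push_cast
    ring_nf
  · have e : m + (-(k : ℤ)).toNat + (m + (-(-(k : ℤ))).toNat) = 2 * m + k := by omega
    have e1 : m + (-(-(k : ℤ))).toNat = m + k := by omega
    have e2 : m + (-(k : ℤ)).toNat = m := by omega
    have e3 : (-(k : ℤ)).natAbs = k := by omega
    rw [e, e1, e2, e3, hs, mul_pow, h1]
    push_cast
    ring_nf

/-- Coefficients of the Chebyshev expansion. -/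
noncomputable def chebCoef (s : ℝ) : ℕ → ℝ
  | 0 => besselI 0 s
  | n + 1 => 2 * ((-1) ^ (n + 1) * besselI (n + 1) s)

lemma cheb_hasSum (s y : ℝ) (h1 : -1 ≤ y) (h2 : y ≤ 1) :
    HasSum (fun n : ℕ => chebCoef s n * chebT n y) (Real.exp (-s * y)) := by
  obtain ⟨θ, rfl⟩ : ∃ θ, y = Real.cos θ := ⟨Real.arccos y, (Real.cos_arccos h1 h2).symm⟩
  have h := (hasSum_nat_add_iff' 1).2 (int_hasSum s θ).nat_add_neg
  refine (hasSum_nat_add_iff' 1).1 ?_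
  have hT : ∀ n : ℤ, chebT n (Real.cos θ) = Real.cos (n * θ) := fun n => by
    rw [chebT, Polynomial.Chebyshev.T_real_cos]
  convert h.congr_fun ?_ using 1
  · simp [hT, chebCoef]; try ring
  · intro n
    have e1 : ((n + 1 : ℕ) : ℤ).natAbs = n + 1 := by omega
    have e2 : (-((n + 1 : ℕ) : ℤ)).natAbs = n + 1 := by omega
    rw [hT, e1, e2, chebCoef]
    push_cast
    rw [neg_mul, Real.cos_neg]
    ring

/-- Chebyshev–Bessel representation of scaled exponential divided differences. -/
theorem scaled_exp_divDiff_chebyshev_bessel (β : ℝ) (hβ : 0 ≤ β) (q : ℕ)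
    (a b : ℝ) (hab : a < b)
    (x : Fin (q + 1) → ℝ) (hx : Function.Injective x)
    (hmem : ∀ i, x i ∈ Set.Icc a b) :
    let c := (b - a) / 2
    let d := (a + b) / 2
    let y : Fin (q + 1) → ℝ := fun i => (x i - d) / c
    Summable (fun n : ℕ =>
      |(-1 : ℝ) ^ (n + 1) * besselI (n + 1) (β * c) * divDiff (chebT (n + 1)) q y|) ∧
    divDiff (fun t => Real.exp (-β * t)) q x =
      Real.exp (-β * d) / c ^ q *
        (besselI 0 (β * c) * divDiff (chebT 0) q y +
          2 * ∑' n : ℕ,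
            (-1 : ℝ) ^ (n + 1) * besselI (n + 1) (β * c) * divDiff (chebT (n + 1)) q y) := by
  intro c d y
  have hc : 0 < c := by simp only [c]; linarith
  have hy : ∀ i, x i = d + c * y i := fun i => by simp only [y]; field_simp; try ring
  have hs : ∀ i, HasSum (fun n : ℕ => chebCoef (β * c) n * chebT n (y i))
      (Real.exp (-(β * c) * y i)) := by
    intro i
    obtain ⟨h1, h2⟩ := hmem i
    apply cheb_hasSum
    · simp only [y]; rw [le_div_iff₀ hc]; simp only [c, d]; linarith
    · simp only [y]; rw [div_le_iff₀ hc]; simp only [c, d]; linarith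
  have H := divDiff_hasSum (chebCoef (β * c)) (fun n => chebT n)
    (fun t => Real.exp (-(β * c) * t)) q y hs
  have H1 := ((hasSum_nat_add_iff' 1).2 H).mul_left (1 / 2)
  have H2 : HasSum (fun n : ℕ =>
      (-1 : ℝ) ^ (n + 1) * besselI (n + 1) (β * c) * divDiff (chebT (n + 1)) q y)
      (1 / 2 * (divDiff (fun t => Real.exp (-(β * c) * t)) q y -
        besselI 0 (β * c) * divDiff (chebT 0) q y)) := by
    have e : ∑ i ∈ Finset.range 1, chebCoef (β * c) i * divDiff (chebT i) q y =
        besselI 0 (β * c) * divDiff (chebT 0) q y := by simp [chebCoef]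
    rw [e] at H1
    refine H1.congr_fun ?_
    · intro n
      rw [chebCoef]
      push_cast
      ring
  refine ⟨H2.summable.abs, ?_⟩
  rw [H2.tsum_eq, divDiff_scale _ (fun t => Real.exp (-(β * c) * t)) (Real.exp (-β * d)) c q x y]
  · ring
  · intro i
    rw [hy, ← Real.exp_add]
    ring_nf
  · intro i j
    rw [hy i, hy j]; ring
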